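/- arXiv:0706.4226 — 4 statements merged into one kernel-verified Lean document; each statement's English description precedes it below -/
import Mathlib

section
/- Let A be an integral domain containing ℚ and let D be a nonzero locally nilpotent derivation of A. Then there exist an algebraically closed field K of characteristic zero and an injective ring homomorphism ι : A → K[S] into the polynomial ring in one variable S over K such that ι ∘ D = ∂_S ∘ ι, where ∂_S is the derivative with respect to S. -/
/-- Let `A` be an integral domain containing `ℚ` and let `D` be a nonzero locally nilpotent
derivation of `A`.  Then there exist an algebraically closed field `K` of characteristic zero
and an injective ring homomorphism `ι : A → K[S]` into the polynomial ring in one variable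
over `K` such that `ι ∘ D = ∂_S ∘ ι`. -/
theorem stmt5 {A : Type u} [CommRing A] [IsDomain A] [Algebra ℚ A]
    (D : Derivation ℤ A A) (hD : D ≠ 0) (hln : ∀ a : A, ∃ n : ℕ, (⇑D)^[n] a = 0) :
    ∃ (K : Type u) (_ : Field K) (_ : IsAlgClosed K) (_ : CharZero K)
      (ι : A →+* Polynomial K),
        Function.Injective ι ∧ ∀ a : A, ι (D a) = Polynomial.derivative (ι a) := by
  have : CharZero A := algebraRat.charZero A
  have : CharZero (FractionRing A) :=
    charZero_of_injective_algebraMap (IsFractionRing.injective A (FractionRing A))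
  let K := AlgebraicClosure (FractionRing A)
  have hK : CharZero K :=
    charZero_of_injective_algebraMap (algebraMap (FractionRing A) K).injective
  let i : A →+* K := (algebraMap (FractionRing A) K).comp (algebraMap A (FractionRing A))
  have hi : Function.Injective i :=
    (algebraMap (FractionRing A) K).injective.comp (IsFractionRing.injective A (FractionRing A))
  have hz : ∀ n, (⇑D)^[n] 0 = 0 := fun n => by
    induction n with
    | zero => rfl
    | succ n ih => rw [Function.iterate_succ_apply, map_zero, ih]
  have hadd : ∀ n a b, (⇑D)^[n] (a + b) = (⇑D)^[n] a + (⇑D)^[n] b := fun n => by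
    induction n with
    | zero => intro a b; rfl
    | succ n ih => intro a b; simp only [Function.iterate_succ_apply, map_add, ih]
  -- the exponential of `S D`
  have hex : ∀ a : A, ∃ p : Polynomial K,
      ∀ n, p.coeff n = i ((⇑D)^[n] a) / (n.factorial : K) := by
    intro a
    obtain ⟨N, hN⟩ := hln a
    refine ⟨∑ n ∈ Finset.range N,
      Polynomial.monomial n (i ((⇑D)^[n] a) / (n.factorial : K)), fun n => ?_⟩
    rw [Polynomial.finsetSum_coeff]
    simp only [Polynomial.coeff_monomial, Finset.sum_ite_eq', Finset.mem_range]
    split_ifs with h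
    · rfl
    · have : (⇑D)^[n] a = 0 := by
        obtain ⟨m, rfl⟩ := Nat.exists_eq_add_of_le' (not_lt.mp h)
        rw [Function.iterate_add_apply, hN, hz]
      simp [this]
  choose f hf using hex
  have hder : ∀ a, f (D a) = Polynomial.derivative (f a) := by
    intro a
    ext n
    rw [Polynomial.coeff_derivative, hf, hf, Function.iterate_succ_apply, Nat.factorial_succ]
    have h1 : (n.factorial : K) ≠ 0 := by exact_mod_cast n.factorial_ne_zero
    have h2 : (n + 1 : K) ≠ 0 := by exact_mod_cast n.succ_ne_zero
    rw [Nat.cast_mul, Nat.cast_succ, div_mul_eq_mul_div, mul_comm (n + 1 : K),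
      mul_div_mul_right _ _ h2]
  have fadd : ∀ a b, f (a + b) = f a + f b := by
    intro a b
    ext n
    rw [Polynomial.coeff_add, hf, hf, hf, hadd, map_add, add_div]
  have fzero : f 0 = 0 := by
    ext n
    rw [hf, hz]; simp
  have fone : f 1 = 1 := by
    ext n
    rw [hf]
    cases n with
    | zero => simp
    | succ n => simp [Function.iterate_succ_apply, hz, Polynomial.coeff_one]
  have fmul : ∀ n a b, (f (a * b)).coeff n = (f a * f b).coeff n := fun n => by
    induction n with
    | zero => intro a b; simp [Polynomial.mul_coeff_zero, hf]
    | succ n ih =>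
      intro a b
      have h2 : (n + 1 : K) ≠ 0 := by exact_mod_cast n.succ_ne_zero
      apply mul_right_cancel₀ h2
      rw [← Polynomial.coeff_derivative, ← Polynomial.coeff_derivative, ← hder,
        Derivation.leibniz, Polynomial.derivative_mul, ← hder, ← hder, fadd, smul_eq_mul,
        smul_eq_mul, Polynomial.coeff_add, Polynomial.coeff_add, ih, ih, add_comm,
        mul_comm (f b)]
  refine ⟨K, inferInstance, inferInstance, hK,
    { toFun := f, map_one' := fone, map_zero' := fzero, map_add' := fadd,
      map_mul' := fun a b => Polynomial.ext fun n => fmul n a b }, ?_, hder⟩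
  intro a b hab
  have h : f a = f b := hab
  have h0 := congrArg (fun p => Polynomial.coeff p 0) h
  simp only [hf] at h0
  exact hi (by simpa using h0)
end

section
/- Let R be an affine ℂ-algebra that is a unique factorization domain with R* = ℂ*, and let r, s ∈ R be nonzero elements sharing no common factor such that the ideal (r, s) is a proper ideal of R. Let A_{r,s} := R[U,V]/(rU − sV − 1) and assume ML(A_{r,s}) = R. Then the group Aut_R(A_{r,s}) of R-algebra automorphisms of A_{r,s} consists exactly of the maps sending (u, v) to (u + ts, v + tr) for t ∈ R (i.e. the exponentials exp(tE)); consequently Aut_R(A_{r,s}) is isomorphic as a group to the additive group (R, +). -/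
open MvPolynomial

/-- A derivation of a commutative ring is locally nilpotent if each element is annihilated
by some iterate of the derivation. -/
def IsLND {B : Type u} [CommRing B] (D : Derivation ℤ B B) : Prop :=
  ∀ b : B, ∃ n : ℕ, (⇑D)^[n] b = 0

/-- The Makar-Limanov invariant of a commutative ring: the intersection of the kernels of
all locally nilpotent derivations. -/
def ML (B : Type) [CommRing B] : Set B :=
  {b : B | ∀ D : Derivation ℤ B B, IsLND D → D b = 0}

/-- `A_{r,s} = R[U,V]/(rU − sV − 1)`. -/
noncomputable abbrev Ars (R : Type) [CommRing R] (r s : R) : Type :=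
  MvPolynomial (Fin 2) R ⧸ Ideal.span {(C r * X 0 - C s * X 1 - 1 : MvPolynomial (Fin 2) R)}

/-- `u`, the image of `U` in `A_{r,s}`. -/
noncomputable def uu (R : Type) [CommRing R] (r s : R) : Ars R r s := Ideal.Quotient.mk _ (X 0)

/-- `v`, the image of `V` in `A_{r,s}`. -/
noncomputable def vv (R : Type) [CommRing R] (r s : R) : Ars R r s := Ideal.Quotient.mk _ (X 1)

section Aux

variable {R : Type} [CommRing R]

lemma ars_rel (r s : R) :
    algebraMap R (Ars R r s) r * uu R r s - algebraMap R (Ars R r s) s * vv R r s = 1 := by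
  have h : (Ideal.Quotient.mk (Ideal.span {(C r * X 0 - C s * X 1 - 1 : MvPolynomial (Fin 2) R)}))
      (C r * X 0 - C s * X 1 - 1) = 0 :=
    Ideal.Quotient.eq_zero_iff_mem.2 (Ideal.subset_span rfl)
  rw [map_sub, map_sub, map_mul, map_mul, map_one, sub_eq_zero] at h
  exact h

noncomputable def arsLift {B : Type} [CommRing B] [Algebra R B] (r s : R) (x y : B)
    (h : algebraMap R B r * x - algebraMap R B s * y = 1) : Ars R r s →ₐ[R] B :=
  Ideal.Quotient.liftₐ _ (MvPolynomial.aeval ![x, y]) (by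
    intro a ha
    rw [Ideal.mem_span_singleton] at ha
    obtain ⟨q, rfl⟩ := ha
    simp [h])

lemma arsLift_u {B : Type} [CommRing B] [Algebra R B] (r s : R) (x y : B)
    (h : algebraMap R B r * x - algebraMap R B s * y = 1) :
    arsLift r s x y h (uu R r s) = x := by
  unfold arsLift uu
  erw [Ideal.Quotient.liftₐ_apply, Ideal.Quotient.lift_mk]
  simp

lemma arsLift_v {B : Type} [CommRing B] [Algebra R B] (r s : R) (x y : B)
    (h : algebraMap R B r * x - algebraMap R B s * y = 1) :
    arsLift r s x y h (vv R r s) = y := by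
  unfold arsLift vv
  erw [Ideal.Quotient.liftₐ_apply, Ideal.Quotient.lift_mk]
  simp

lemma ars_ext {B : Type} [CommRing B] [Algebra R B] {r s : R} {f g : Ars R r s →ₐ[R] B}
    (hu : f (uu R r s) = g (uu R r s)) (hv : f (vv R r s) = g (vv R r s)) : f = g := by
  apply Ideal.Quotient.algHom_ext
  apply MvPolynomial.algHom_ext
  intro i
  fin_cases i
  · exact hu
  · exact hv

lemma ars_rel_t (r s t : R) :
    algebraMap R (Ars R r s) r * (uu R r s + algebraMap R (Ars R r s) (t * s))
      - algebraMap R (Ars R r s) s * (vv R r s + algebraMap R (Ars R r s) (t * r)) = 1 := by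
  rw [← ars_rel r s, map_mul, map_mul]; ring

noncomputable def tauHom (r s t : R) : Ars R r s →ₐ[R] Ars R r s :=
  arsLift r s _ _ (ars_rel_t r s t)

lemma tauHom_u (r s t : R) :
    tauHom r s t (uu R r s) = uu R r s + algebraMap R (Ars R r s) (t * s) := arsLift_u ..

lemma tauHom_v (r s t : R) :
    tauHom r s t (vv R r s) = vv R r s + algebraMap R (Ars R r s) (t * r) := arsLift_v ..

lemma tauHom_comp (r s t t' : R) :
    (tauHom r s t).comp (tauHom r s t') = tauHom r s (t + t') := by
  apply ars_ext
  · rw [AlgHom.comp_apply, tauHom_u, tauHom_u, map_add, tauHom_u, AlgHom.commutes, add_mul, map_add,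
      add_assoc]
  · rw [AlgHom.comp_apply, tauHom_v, tauHom_v, map_add, tauHom_v, AlgHom.commutes, add_mul, map_add,
      add_assoc]

lemma tauHom_zero (r s : R) : tauHom r s 0 = AlgHom.id R _ := by
  apply ars_ext
  · rw [tauHom_u]; simp
  · rw [tauHom_v]; simp

noncomputable def tau (r s t : R) : Ars R r s ≃ₐ[R] Ars R r s :=
  AlgEquiv.ofAlgHom (tauHom r s t) (tauHom r s (-t))
    (by rw [tauHom_comp, add_neg_cancel, tauHom_zero])
    (by rw [tauHom_comp, neg_add_cancel, tauHom_zero])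

lemma tau_apply (r s t : R) (x : Ars R r s) : tau r s t x = tauHom r s t x := rfl

lemma ars_exists_pow (r s : R) (x : Ars R r s) :
    ∃ (n : ℕ) (p : Polynomial R), algebraMap R (Ars R r s) s ^ n * x
      = Polynomial.aeval (uu R r s) p := by
  obtain ⟨f, rfl⟩ := Ideal.Quotient.mk_surjective x
  induction f using MvPolynomial.induction_on with
  | C a => exact ⟨0, Polynomial.C a, by simp; rfl⟩
  | add f g hf hg =>
    obtain ⟨n, p, hp⟩ := hf
    obtain ⟨m, q, hq⟩ := hg
    refine ⟨n + m, Polynomial.C s ^ m * p + Polynomial.C s ^ n * q, ?_⟩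
    rw [map_add, map_add, map_mul, map_mul, map_pow, map_pow, Polynomial.aeval_C, ← hp, ← hq]
    ring
  | mul_X f i hf =>
    obtain ⟨n, p, hp⟩ := hf
    fin_cases i
    · refine ⟨n, p * Polynomial.X, ?_⟩
      rw [map_mul, map_mul, ← hp, Polynomial.aeval_X, mul_assoc]
      rfl
    · refine ⟨n + 1, p * (Polynomial.C r * Polynomial.X - 1), ?_⟩
      rw [map_mul, map_mul, ← hp]
      have := ars_rel r s
      have h2 : (Polynomial.aeval (uu R r s)) (Polynomial.C r * Polynomial.X - 1)
          = algebraMap R (Ars R r s) s * vv R r s := by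
        rw [map_sub, map_mul, Polynomial.aeval_C, Polynomial.aeval_X, map_one, ← this]; ring
      rw [h2]
      change _ * (_ * vv R r s) = _
      ring

lemma ars_isDomain [IsDomain R] [UniqueFactorizationMonoid R] (r s : R) (hr : r ≠ 0) :
    IsDomain (Ars R r s) := by
  set g : MvPolynomial (Fin 2) R := C r * X 0 - C s * X 1 - 1 with hg
  have hc0 : MvPolynomial.constantCoeff g = -1 := by simp [hg]
  have hne : (Finsupp.single (1 : Fin 2) 1 : Fin 2 →₀ ℕ) ≠ Finsupp.single 0 1 := by
    intro h
    have := DFunLike.congr_fun h 0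
    simp at this
  have hne0 : (0 : Fin 2 →₀ ℕ) ≠ Finsupp.single 0 1 := by
    intro h
    have := DFunLike.congr_fun h 0
    simp at this
  have hc1 : MvPolynomial.coeff (Finsupp.single 0 1) g = r := by
    rw [hg, MvPolynomial.coeff_sub, MvPolynomial.coeff_sub, MvPolynomial.coeff_C_mul,
      MvPolynomial.coeff_C_mul, MvPolynomial.coeff_one, if_neg hne0]
    rw [MvPolynomial.coeff_X, MvPolynomial.coeff_X, if_neg hne]
    simp
  have hg0 : g ≠ 0 := by
    intro h; rw [h] at hc1; exact hr (by simpa using hc1.symm)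
  have hdeg : g.totalDegree ≤ 1 := by
    rw [hg]
    refine (MvPolynomial.totalDegree_sub _ _).trans (max_le ?_ (by simp))
    refine (MvPolynomial.totalDegree_sub _ _).trans (max_le ?_ ?_)
    · refine (MvPolynomial.totalDegree_mul _ _).trans ?_
      simp
    · refine (MvPolynomial.totalDegree_mul _ _).trans ?_
      simp
  have key : ∀ a b : MvPolynomial (Fin 2) R, g = a * b → a.totalDegree = 0 → IsUnit a := by
    intro a b hab h0
    rw [MvPolynomial.totalDegree_eq_zero_iff_eq_C] at h0
    rw [hab, map_mul] at hc0
    have : IsUnit (MvPolynomial.constantCoeff a) :=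
      IsUnit.of_mul_eq_one (-(MvPolynomial.constantCoeff b)) (by rw [mul_neg, hc0, neg_neg])
    rw [h0]
    exact this.map MvPolynomial.C
  have hirr : Irreducible g := by
    refine ⟨?_, ?_⟩
    · intro hu
      rw [MvPolynomial.isUnit_iff_totalDegree_of_isReduced] at hu
      have := hu.2
      rw [MvPolynomial.totalDegree_eq_zero_iff_eq_C] at this
      rw [this, MvPolynomial.coeff_C, if_neg hne0] at hc1
      exact hr hc1.symm
    · intro a b hab
      have ha : a ≠ 0 := by rintro rfl; simp at hab; exact hg0 hab
      have hb : b ≠ 0 := by rintro rfl; simp at hab; exact hg0 hab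
      have hd := MvPolynomial.totalDegree_mul_of_isDomain ha hb
      rw [← hab] at hd
      rcases Nat.eq_zero_or_pos a.totalDegree with h | h
      · exact Or.inl (key a b hab h)
      · exact Or.inr (key b a (by rw [hab, mul_comm]) (by omega))
  have hp : Prime g := hirr.prime
  have : (Ideal.span {g}).IsPrime := (Ideal.span_singleton_prime hg0).2 hp
  exact Ideal.Quotient.isDomain _

end Aux

section Emb

variable {R : Type} [CommRing R] [IsDomain R]

/-- The embedding into polynomials over the fraction field. -/
noncomputable def emb (r s : R) (hs : s ≠ 0) : Ars R r s →ₐ[R] Polynomial (FractionRing R) :=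
  arsLift r s Polynomial.X
    (Polynomial.C (algebraMap R (FractionRing R) s)⁻¹ *
      (Polynomial.C (algebraMap R (FractionRing R) r) * Polynomial.X - 1)) (by
    have h : algebraMap R (FractionRing R) s ≠ 0 := by
      simpa using hs
    rw [Polynomial.algebraMap_apply, Polynomial.algebraMap_apply, ← mul_assoc, ← Polynomial.C_mul,
      mul_inv_cancel₀ h]
    simp)

lemma emb_u (r s : R) (hs : s ≠ 0) : emb r s hs (uu R r s) = Polynomial.X := arsLift_u ..

lemma emb_aeval (r s : R) (hs : s ≠ 0) (p : Polynomial R) :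
    emb r s hs (Polynomial.aeval (uu R r s) p) = p.map (algebraMap R (FractionRing R)) := by
  rw [← Polynomial.aeval_algHom_apply, emb_u]
  rw [Polynomial.aeval_def, Polynomial.map]
  rfl

end Emb

section Main

variable {R : Type} [CommRing R] [IsDomain R] [UniqueFactorizationMonoid R]

lemma emb_inj (r s : R) (hr : r ≠ 0) (hs : s ≠ 0) : Function.Injective (emb r s hs) := by
  haveI := ars_isDomain r s hr
  rw [injective_iff_map_eq_zero]
  intro x hx
  obtain ⟨n, p, hp⟩ := ars_exists_pow r s x
  have h1 := congrArg (emb r s hs) hp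
  rw [emb_aeval, map_mul, hx, mul_zero] at h1
  have h2 : p = 0 := (Polynomial.map_eq_zero_iff (IsFractionRing.injective R (FractionRing R))).1 h1.symm
  rw [h2, map_zero] at hp
  rcases mul_eq_zero.1 hp with h | h
  · exfalso
    have h3 := congrArg (emb r s hs) (show algebraMap R (Ars R r s) s = 0 from by_contra fun h0 => pow_ne_zero n h0 h)
    rw [AlgHom.commutes, map_zero, Polynomial.algebraMap_apply, Polynomial.C_eq_zero] at h3
    exact hs (by simpa using h3)
  · exact h

lemma ars_algebraMap_inj (r s : R) (hs : s ≠ 0) :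
    Function.Injective (algebraMap R (Ars R r s)) := by
  intro a b h
  have h3 := congrArg (emb r s hs) h
  rw [AlgHom.commutes, AlgHom.commutes, Polynomial.algebraMap_apply, Polynomial.algebraMap_apply]
    at h3
  exact IsFractionRing.injective R (FractionRing R) (Polynomial.C_injective h3)

lemma mem_range_of_mul (r s : R) (hr : r ≠ 0) (hs : s ≠ 0)
    (hML : ML (Ars R r s) = Set.range (algebraMap R (Ars R r s)))
    (a b : R) (ha : a ≠ 0) (x : Ars R r s)
    (h : algebraMap R (Ars R r s) a * x = algebraMap R (Ars R r s) b) :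
    ∃ c, algebraMap R (Ars R r s) c = x := by
  haveI := ars_isDomain r s hr
  change x ∈ Set.range (algebraMap R (Ars R r s))
  rw [← hML]
  have hR : ∀ c, algebraMap R (Ars R r s) c ∈ ML (Ars R r s) := by
    intro c; rw [hML]; exact ⟨c, rfl⟩
  intro D hD
  have h1 := congrArg D h
  rw [Derivation.leibniz, hR a D hD, hR b D hD, smul_zero, add_zero, smul_eq_mul] at h1
  rcases mul_eq_zero.1 h1 with h | h
  · exact absurd (ars_algebraMap_inj r s hs (h.trans (map_zero _).symm)) ha
  · exact h

lemma mem_range_of_emb (r s : R) (hr : r ≠ 0) (hs : s ≠ 0)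
    (hML : ML (Ars R r s) = Set.range (algebraMap R (Ars R r s)))
    (x : Ars R r s) (k : FractionRing R) (h : emb r s hs x = Polynomial.C k) :
    ∃ c, algebraMap R (Ars R r s) c = x := by
  obtain ⟨n, p, hp⟩ := ars_exists_pow r s x
  have h1 := congrArg (emb r s hs) hp
  rw [emb_aeval, map_mul, map_pow, h, AlgHom.commutes, Polynomial.algebraMap_apply,
    ← Polynomial.C_pow, ← Polynomial.C_mul] at h1
  have h2 : p.natDegree = 0 := by
    rw [← Polynomial.natDegree_map_eq_of_injective (IsFractionRing.injective R (FractionRing R)),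
      ← h1, Polynomial.natDegree_C]
  rw [Polynomial.eq_C_of_natDegree_eq_zero h2, Polynomial.aeval_C, ← map_pow] at hp
  exact mem_range_of_mul r s hr hs hML _ _ (pow_ne_zero n hs) x hp

lemma emb_tau (r s : R) (hs : s ≠ 0) (t : R) (x : Ars R r s) :
    emb r s hs (tauHom r s t x) = (emb r s hs x).comp
      (Polynomial.X + Polynomial.C (algebraMap R (FractionRing R) (t * s))) := by
  let f : Polynomial (FractionRing R) →ₐ[R] Polynomial (FractionRing R) :=
    (Polynomial.aeval (R := FractionRing R)
      (Polynomial.X + Polynomial.C (algebraMap R (FractionRing R) (t * s)))).restrictScalars R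
  have hs' : Polynomial.C (algebraMap R (FractionRing R) s) ≠ 0 := by simpa using hs
  have hv : algebraMap R _ s * emb r s hs (vv R r s)
      = algebraMap R _ r * Polynomial.X - 1 := by
    have := congrArg (emb r s hs) (ars_rel r s)
    rw [map_sub, map_mul, map_mul, AlgHom.commutes, AlgHom.commutes, emb_u, map_one] at this
    rw [← this]; ring
  have hfX : f Polynomial.X =
      Polynomial.X + Polynomial.C (algebraMap R (FractionRing R) (t * s)) :=
    Polynomial.aeval_X _
  have : (emb r s hs).comp (tauHom r s t) = f.comp (emb r s hs) := by
    apply ars_ext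
    · rw [AlgHom.comp_apply, AlgHom.comp_apply, tauHom_u, map_add, emb_u, AlgHom.commutes, hfX]
      rfl
    · rw [AlgHom.comp_apply, AlgHom.comp_apply, tauHom_v, map_add, AlgHom.commutes]
      apply mul_left_cancel₀ hs'
      have h1 := congrArg f hv
      rw [map_mul, AlgHom.commutes, map_sub, map_mul, AlgHom.commutes, hfX, map_one] at h1
      change algebraMap R _ s * _ = algebraMap R _ s * _
      rw [h1, mul_add, hv]
      change _ = algebraMap R _ r * (Polynomial.X + algebraMap R _ (t * s)) - 1
      rw [map_mul, map_mul]; ring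
  exact DFunLike.congr_fun this x

lemma emb_phi_degree (r s : R) (hr : r ≠ 0) (hs : s ≠ 0) (φ : Ars R r s ≃ₐ[R] Ars R r s) :
    (emb r s hs (φ (uu R r s))).natDegree = 1 := by
  obtain ⟨m, q, hq⟩ := ars_exists_pow r s (φ.symm (uu R r s))
  have h1 := congrArg (fun x => emb r s hs (φ x)) hq
  simp only [map_mul, map_pow, AlgEquiv.commutes, AlgHom.commutes, AlgEquiv.apply_symm_apply] at h1
  rw [← AlgEquiv.coe_algHom φ, ← Polynomial.aeval_algHom_apply, ← Polynomial.aeval_algHom_apply,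
    emb_u] at h1
  have h2 : Polynomial.aeval (emb r s hs (φ (uu R r s))) q =
      (q.map (algebraMap R (FractionRing R))).comp (emb r s hs (φ (uu R r s))) := by
    rw [Polynomial.comp, Polynomial.eval₂_map]
    rfl
  have h3 := congrArg Polynomial.natDegree (h1.trans h2)
  rw [Polynomial.natDegree_comp, Polynomial.algebraMap_apply, ← Polynomial.C_pow,
    Polynomial.natDegree_C_mul_X] at h3
  · exact Nat.eq_one_of_mul_eq_one_left h3.symm
  · exact pow_ne_zero _ (by simpa using hs)

lemma phi_linear (r s : R) (hr : r ≠ 0) (hs : s ≠ 0)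
    (hcop : ∀ d : R, d ∣ r → d ∣ s → IsUnit d)
    (hML : ML (Ars R r s) = Set.range (algebraMap R (Ars R r s)))
    (φ : Ars R r s ≃ₐ[R] Ars R r s) :
    ∃ a b b' : R, φ (uu R r s) = algebraMap R _ a * uu R r s + algebraMap R _ b ∧
      φ (vv R r s) = algebraMap R _ a * vv R r s + algebraMap R _ b' ∧
      a + r * b - s * b' = 1 := by
  haveI := ars_isDomain r s hr
  have hinj := ars_algebraMap_inj r s hs
  have hrel := ars_rel r s
  have hφ := congrArg φ hrel
  rw [map_sub, map_mul, map_mul, AlgEquiv.commutes, AlgEquiv.commutes, map_one] at hφ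
  have hs' : algebraMap R (Ars R r s) s ≠ 0 := by
    intro h; exact hs (hinj (h.trans (map_zero _).symm))
  obtain ⟨c, d, hcd⟩ : ∃ c d, emb r s hs (φ (uu R r s)) = Polynomial.C c * Polynomial.X
      + Polynomial.C d :=
    Polynomial.exists_eq_X_add_C_of_natDegree_le_one (emb_phi_degree r s hr hs φ).le
  obtain ⟨e, he⟩ := mem_range_of_emb r s hr hs hML
    (tauHom r s 1 (φ (uu R r s)) - φ (uu R r s)) (c * algebraMap R _ s) (by
      rw [map_sub, emb_tau, hcd]
      simp
      ring)
  have hφτ := congrArg (tauHom r s 1) hφ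
  rw [map_sub, map_mul, map_mul, AlgHom.commutes, AlgHom.commutes, map_one] at hφτ
  have hev : algebraMap R (Ars R r s) s * (tauHom r s 1 (φ (vv R r s)) - φ (vv R r s))
      = algebraMap R _ (r * e) := by
    rw [map_mul, he]
    linear_combination hφ - hφτ
  obtain ⟨e', he'⟩ := mem_range_of_mul r s hr hs hML _ _ hs _ hev
  have hee : s * e' = r * e := by
    apply hinj
    rw [← hev, ← he', map_mul]
  have hrp : IsRelPrime s r := fun d h1 h2 => hcop d h2 h1
  obtain ⟨a, ha⟩ : s ∣ e := hrp.dvd_of_dvd_mul_left ⟨e', hee.symm⟩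
  have hca : c = algebraMap R _ a := by
    have h1 := congrArg (emb r s hs) he
    rw [map_sub, emb_tau, hcd, AlgHom.commutes, Polynomial.algebraMap_apply, ha] at h1
    have h2 : Polynomial.C (algebraMap R (FractionRing R) (s * a))
        = Polynomial.C (c * algebraMap R (FractionRing R) s) := by
      rw [h1]; simp; ring
    have h3 := Polynomial.C_injective h2
    rw [map_mul, mul_comm] at h3
    exact (mul_right_cancel₀ (by simpa using hs) h3).symm
  obtain ⟨b, hb⟩ := mem_range_of_emb r s hr hs hML
    (φ (uu R r s) - algebraMap R _ a * uu R r s) d (by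
      rw [map_sub, map_mul, hcd, AlgHom.commutes, emb_u, hca, Polynomial.algebraMap_apply]
      ring)
  have hv : algebraMap R (Ars R r s) s * (φ (vv R r s) - algebraMap R _ a * vv R r s)
      = algebraMap R _ (r * b + a - 1) := by
    rw [map_sub, map_add, map_mul, hb, map_one]
    linear_combination algebraMap R (Ars R r s) a * hrel - hφ
  obtain ⟨b', hb'⟩ := mem_range_of_mul r s hr hs hML _ _ hs _ hv
  refine ⟨a, b, b', by rw [hb]; ring, by rw [hb']; ring, ?_⟩
  rw [← hb', ← map_mul] at hv
  have := hinj hv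
  linear_combination -this

end Main

/-- Let `R` be an affine `ℂ`-algebra UFD with `R* = ℂ*`, and let `r, s ∈ R` be nonzero,
without common factor, generating a proper ideal.  Assume `ML(A_{r,s}) = R`.  Then the
`R`-algebra automorphisms of `A_{r,s}` are exactly the maps `(u,v) ↦ (u + ts, v + tr)`
(`= exp(tE)`) for `t ∈ R`; consequently `Aut_R(A_{r,s})` is isomorphic as a group to the
additive group `(R, +)`. -/
theorem stmt12 {R : Type} [CommRing R] [IsDomain R] [Algebra ℂ R] [Algebra.FiniteType ℂ R]
    [UniqueFactorizationMonoid R]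
    (hRunits : ∀ ρ : R, IsUnit ρ ↔ ∃ c : ℂ, c ≠ 0 ∧ algebraMap ℂ R c = ρ)
    (r s : R) (hr : r ≠ 0) (hs : s ≠ 0)
    (hcop : ∀ d : R, d ∣ r → d ∣ s → IsUnit d)
    (hproper : Ideal.span {r, s} ≠ (⊤ : Ideal R))
    (hML : ML (Ars R r s) = Set.range (algebraMap R (Ars R r s))) :
    (∀ φ : Ars R r s ≃ₐ[R] Ars R r s, ∃ t : R,
        φ (uu R r s) = uu R r s + algebraMap R (Ars R r s) (t * s) ∧
        φ (vv R r s) = vv R r s + algebraMap R (Ars R r s) (t * r)) ∧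
    (∀ t : R, ∃ φ : Ars R r s ≃ₐ[R] Ars R r s,
        φ (uu R r s) = uu R r s + algebraMap R (Ars R r s) (t * s) ∧
        φ (vv R r s) = vv R r s + algebraMap R (Ars R r s) (t * r)) ∧
    Nonempty ((Ars R r s ≃ₐ[R] Ars R r s) ≃* Multiplicative R) := by
  have hinj := ars_algebraMap_inj r s hs
  have hdiv : ∀ φ : Ars R r s ≃ₐ[R] Ars R r s, ∃ t : R,
        φ (uu R r s) = uu R r s + algebraMap R (Ars R r s) (t * s) ∧
        φ (vv R r s) = vv R r s + algebraMap R (Ars R r s) (t * r) := by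
    intro φ
    obtain ⟨a, b, b', hu, hv, hab⟩ := phi_linear r s hr hs hcop hML φ
    obtain ⟨a2, b2, b2', hu2, hv2, hab2⟩ := phi_linear r s hr hs hcop hML φ.symm
    have h1 := congrArg φ hu2
    rw [AlgEquiv.apply_symm_apply, map_add, map_mul, AlgEquiv.commutes, AlgEquiv.commutes, hu] at h1
    have h2 := congrArg (emb r s hs) h1
    simp only [map_add, map_mul, AlgHom.commutes, emb_u, Polynomial.algebraMap_apply] at h2
    have h3 := congrArg (fun p => Polynomial.coeff p 1) h2
    have h4 : (1 : FractionRing R) = algebraMap R _ (a2 * a) := by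
      simpa [mul_add, Polynomial.coeff_C, Polynomial.coeff_X] using h3
    have h5 : a2 * a = 1 := by
      apply IsFractionRing.injective R (FractionRing R)
      rw [← h4, map_one]
    obtain ⟨c, hc0, hc⟩ := (hRunits a).1 (IsUnit.of_mul_eq_one a2 (by rw [mul_comm, h5]))
    have ha1 : a = 1 := by
      by_contra hne
      apply hproper
      have hc1 : 1 - c ≠ 0 := by
        intro h
        apply hne
        rw [← hc, ← sub_eq_zero.1 h, map_one]
      have hunit : IsUnit (1 - a) := (hRunits _).2 ⟨1 - c, hc1, by rw [map_sub, map_one, hc]⟩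
      refine Ideal.eq_top_of_isUnit_mem _ ?_ hunit
      rw [Ideal.mem_span_pair]
      exact ⟨b, -b', by linear_combination hab⟩
    subst ha1
    have hrp : IsRelPrime s r := fun d h1 h2 => hcop d h2 h1
    have hrb : r * b = s * b' := by linear_combination hab
    obtain ⟨t, rfl⟩ : s ∣ b := hrp.dvd_of_dvd_mul_left ⟨b', hrb⟩
    have hb' : b' = t * r := by
      apply mul_left_cancel₀ hs
      rw [← hrb]; ring
    refine ⟨t, ?_, ?_⟩
    · rw [hu, map_one, one_mul, mul_comm s t]
    · rw [hv, map_one, one_mul, hb']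
  refine ⟨hdiv, fun t => ⟨tau r s t, tauHom_u r s t, tauHom_v r s t⟩, ?_⟩
  let F : Multiplicative R →* (Ars R r s ≃ₐ[R] Ars R r s) :=
    { toFun := fun t => tau r s t.toAdd
      map_one' := by
        ext x
        exact DFunLike.congr_fun (tauHom_zero r s) x
      map_mul' := fun t t' => by
        ext x
        exact (DFunLike.congr_fun (tauHom_comp r s t.toAdd t'.toAdd) x).symm }
  have hF : Function.Bijective F := by
    constructor
    · intro t t' h
      have h1 : tauHom r s t.toAdd (uu R r s) = tauHom r s t'.toAdd (uu R r s) :=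
        DFunLike.congr_fun h (uu R r s)
      rw [tauHom_u, tauHom_u] at h1
      exact Multiplicative.toAdd.injective (mul_right_cancel₀ hs (hinj (add_left_cancel h1)))
    · intro φ
      obtain ⟨t, hu, hv⟩ := hdiv φ
      refine ⟨Multiplicative.ofAdd t, ?_⟩
      have : tauHom r s t = (φ : Ars R r s →ₐ[R] Ars R r s) := by
        apply ars_ext
        · rw [tauHom_u]; exact hu.symm
        · rw [tauHom_v]; exact hv.symm
      ext x
      exact DFunLike.congr_fun this x
  exact ⟨(MulEquiv.ofBijective F hF).symm⟩
end

section
/- Let R be a finitely generated ℂ-algebra domain and let r, s, r', s' ∈ R. If the radical of the ideal (r, s) equals the radical of the ideal (r', s'), then the polynomial rings A_{r,s}[T] and A_{r',s'}[T] are isomorphic (as R-algebras, and in particular as ℂ-algebras), where A_{r,s} := R[U,V]/(rU − sV − 1) and A_{r',s'} := R[U',V']/(r'U' − s'V' − 1). -/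
open MvPolynomial

open scoped TensorProduct

/-- The image of `U`. -/
noncomputable def ArsU (R : Type) [CommRing R] (r s : R) : Ars R r s :=
  Ideal.Quotient.mk _ (X 0)

/-- The image of `V`. -/
noncomputable def ArsV (R : Type) [CommRing R] (r s : R) : Ars R r s :=
  Ideal.Quotient.mk _ (X 1)

theorem Ars_rel (R : Type) [CommRing R] (r s : R) :
    algebraMap R (Ars R r s) r * ArsU R r s - algebraMap R (Ars R r s) s * ArsV R r s = 1 := by
  have h : (Ideal.Quotient.mk (Ideal.span {(C r * X 0 - C s * X 1 - 1 : MvPolynomial (Fin 2) R)}))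
      (C r * X 0 - C s * X 1 - 1) = 0 :=
    Ideal.Quotient.eq_zero_iff_mem.2 (Ideal.subset_span rfl)
  rw [map_sub, map_sub, map_mul, map_mul, map_one, sub_eq_zero] at h
  exact h

/-- Universal property of `A_{r,s}`. -/
noncomputable def ArsLift {R : Type} [CommRing R] (r s : R) {B : Type} [CommRing B] [Algebra R B]
    (x y : B) (h : algebraMap R B r * x - algebraMap R B s * y = 1) : Ars R r s →ₐ[R] B :=
  Ideal.Quotient.liftₐ _ (aeval ![x, y]) (by
    intro p hp
    have : Ideal.span {(C r * X 0 - C s * X 1 - 1 : MvPolynomial (Fin 2) R)} ≤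
        RingHom.ker (aeval ![x, y] : MvPolynomial (Fin 2) R →ₐ[R] B) := by
      rw [Ideal.span_le, Set.singleton_subset_iff]
      simp [RingHom.mem_ker, ← MvPolynomial.algebraMap_eq, h]
    exact this hp)

theorem ArsLift_U {R : Type} [CommRing R] (r s : R) {B : Type} [CommRing B] [Algebra R B]
    (x y : B) (h : algebraMap R B r * x - algebraMap R B s * y = 1) :
    ArsLift r s x y h (ArsU R r s) = x := by
  have : ArsLift r s x y h (ArsU R r s) = aeval ![x, y] (X 0 : MvPolynomial (Fin 2) R) := rfl
  simp [this]

theorem ArsLift_V {R : Type} [CommRing R] (r s : R) {B : Type} [CommRing B] [Algebra R B]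
    (x y : B) (h : algebraMap R B r * x - algebraMap R B s * y = 1) :
    ArsLift r s x y h (ArsV R r s) = y := by
  have : ArsLift r s x y h (ArsV R r s) = aeval ![x, y] (X 1 : MvPolynomial (Fin 2) R) := rfl
  simp [this]

theorem Ars_hom_ext {R : Type} [CommRing R] {r s : R} {B : Type} [CommRing B] [Algebra R B]
    {f g : Ars R r s →ₐ[R] B} (hU : f (ArsU R r s) = g (ArsU R r s))
    (hV : f (ArsV R r s) = g (ArsV R r s)) : f = g := by
  apply Ideal.Quotient.algHom_ext
  apply MvPolynomial.algHom_ext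
  intro i
  fin_cases i
  · exact hU
  · exact hV

/-- Universal property of `A_{r,s}`, as a predicate on an abstract `R`-algebra. -/
structure IsArs {R : Type} [CommRing R] (r s : R) (Q : Type) [CommRing Q] [Algebra R Q]
    (u v : Q) : Prop where
  rel : algebraMap R Q r * u - algebraMap R Q s * v = 1
  lift : ∀ {B : Type} [CommRing B] [Algebra R B] (x y : B),
    algebraMap R B r * x - algebraMap R B s * y = 1 → ∃ f : Q →ₐ[R] B, f u = x ∧ f v = y
  hom_ext : ∀ {B : Type} [CommRing B] [Algebra R B] (f g : Q →ₐ[R] B),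
    f u = g u → f v = g v → f = g

theorem Ars_isArs {R : Type} [CommRing R] (r s : R) :
    IsArs r s (Ars R r s) (ArsU R r s) (ArsV R r s) where
  rel := Ars_rel R r s
  lift x y h := ⟨ArsLift r s x y h, ArsLift_U r s x y h, ArsLift_V r s x y h⟩
  hom_ext _ _ hU hV := Ars_hom_ext hU hV

theorem trivialize {R : Type} [CommRing R] (r s : R) {Q : Type} [CommRing Q] [Algebra R Q]
    {u v : Q} (hQ : IsArs r s Q u v) {A : Type} [CommRing A] [Algebra R A]
    (a b : A) (h : algebraMap R A r * a - algebraMap R A s * b = 1) :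
    Nonempty (A ⊗[R] Q ≃ₐ[A] Polynomial A) := by
  have hrel : algebraMap R (Polynomial A) r *
        (Polynomial.C a + Polynomial.C (algebraMap R A s) * Polynomial.X) -
      algebraMap R (Polynomial A) s *
        (Polynomial.C b + Polynomial.C (algebraMap R A r) * Polynomial.X) = 1 := by
    have h2 := congrArg (Polynomial.C) h
    simp only [map_sub, map_mul, map_one] at h2
    rw [Polynomial.algebraMap_apply, Polynomial.algebraMap_apply]
    linear_combination h2
  obtain ⟨l, hlu, hlv⟩ := hQ.lift _ _ hrel
  let f : A ⊗[R] Q →ₐ[A] Polynomial A :=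
    Algebra.TensorProduct.lift (Algebra.ofId A (Polynomial A)) l
      (fun _ _ => Commute.all _ _)
  let t : A ⊗[R] Q := a ⊗ₜ v - b ⊗ₜ u
  let g : Polynomial A →ₐ[A] A ⊗[R] Q := Polynomial.aeval t
  have e1 : ∀ x : R, (algebraMap R A x) ⊗ₜ[R] (1 : Q) =
      (1 : A) ⊗ₜ[R] algebraMap R (Q) x := fun x =>
    (Algebra.TensorProduct.tmul_one_eq_one_tmul x)
  -- work in the tensor product
  set ι : A →+* A ⊗[R] Q := Algebra.TensorProduct.includeLeftRingHom with hι
  set κ : Q →ₐ[R] A ⊗[R] Q := Algebra.TensorProduct.includeRight with hκ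
  have hA : ι (algebraMap R A r) * ι a - ι (algebraMap R A s) * ι b = 1 := by
    rw [← map_mul, ← map_mul, ← map_sub, h, map_one]
  have hB : ι (algebraMap R A r) * κ u - ι (algebraMap R A s) * κ v = 1 := by
    have h1 : ∀ x : R, ι (algebraMap R A x) = κ (algebraMap R _ x) := e1
    rw [h1, h1, ← map_mul, ← map_mul, ← map_sub, hQ.rel, map_one]
  have ht : t = ι a * κ v - ι b * κ u := by
    simp [t, ι, κ]
  have gC : ∀ x, g (Polynomial.C x) = ι x := fun x => Polynomial.aeval_C _ _
  have gX : g Polynomial.X = t := Polynomial.aeval_X _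
  have fι : ∀ x, f (ι x) = Polynomial.C x := by
    intro x
    simp [f, ι, Algebra.ofId_apply]
  have fκ : ∀ x, f (κ x) = l x := by
    intro x
    simp [f, κ]
  refine ⟨AlgEquiv.ofAlgHom f g ?_ ?_⟩
  · apply Polynomial.algHom_ext
    rw [AlgHom.comp_apply, gX, ht, map_sub, map_mul, map_mul, fι, fι, fκ, fκ, hlu, hlv]
    have h2 := congrArg (Polynomial.C) h
    simp only [map_sub, map_mul, map_one] at h2
    rw [AlgHom.id_apply]
    linear_combination Polynomial.X * h2
  · apply Algebra.TensorProduct.ext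
    · ext
    · apply hQ.hom_ext
      · change g (f (κ u)) = κ u
        rw [fκ, hlu, map_add, map_mul, gC, gC, gX, ht]
        linear_combination κ u * hA - ι a * hB
      · change g (f (κ v)) = κ v
        rw [fκ, hlv, map_add, map_mul, gC, gC, gX, ht]
        linear_combination κ v * hA - ι b * hB

theorem exists_coeffs {R : Type} [CommRing R] (r s r' s' : R)
    (hrad : (Ideal.span {r, s}).radical = (Ideal.span {r', s'}).radical) :
    ∃ a b : Ars R r s, algebraMap R _ r' * a - algebraMap R _ s' * b = 1 := by
  set φ := algebraMap R (Ars R r s) with hφ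
  have hle : Ideal.span {r, s} ≤ ((Ideal.span {φ r', φ s'}).radical).comap φ := by
    refine (Ideal.le_radical).trans ?_
    rw [hrad, Ideal.comap_radical]
    apply Ideal.radical_mono
    rw [Ideal.span_le]
    rintro x (rfl | rfl)
    · exact Ideal.subset_span (Or.inl rfl)
    · exact Ideal.subset_span (Or.inr rfl)
  have hr : φ r ∈ (Ideal.span {φ r', φ s'}).radical := hle (Ideal.subset_span (Or.inl rfl))
  have hs : φ s ∈ (Ideal.span {φ r', φ s'}).radical := hle (Ideal.subset_span (Or.inr rfl))
  have h1 : (1 : Ars R r s) ∈ (Ideal.span {φ r', φ s'}).radical := by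
    rw [← Ars_rel R r s]
    exact Ideal.sub_mem _ (Ideal.mul_mem_right _ _ hr) (Ideal.mul_mem_right _ _ hs)
  obtain ⟨n, hn⟩ := h1
  rw [one_pow, Ideal.mem_span_pair] at hn
  obtain ⟨a, b, hab⟩ := hn
  exact ⟨a, -b, by linear_combination hab⟩

/-- Let `R` be a finitely generated `ℂ`-algebra domain and `r, s, r', s' ∈ R`.  If
`rad(r, s) = rad(r', s')`, then `A_{r,s}[T] ≅ A_{r',s'}[T]` as `R`-algebras (in particular
as `ℂ`-algebras). -/
theorem stmt13 {R : Type} [CommRing R] [IsDomain R] [Algebra ℂ R] [Algebra.FiniteType ℂ R]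
    (r s r' s' : R)
    (hrad : (Ideal.span {r, s}).radical = (Ideal.span {r', s'}).radical) :
    Nonempty (Polynomial (Ars R r s) ≃ₐ[R] Polynomial (Ars R r' s')) := by
  obtain ⟨a, b, h⟩ := exists_coeffs r s r' s' hrad
  obtain ⟨a', b', h'⟩ := exists_coeffs r' s' r s hrad.symm
  obtain ⟨e⟩ := trivialize r' s' (Ars_isArs r' s') a b h
  obtain ⟨e'⟩ := trivialize r s (Ars_isArs r s) a' b' h'
  exact ⟨((e.restrictScalars R).symm.trans (Algebra.TensorProduct.comm R _ _)).trans
    (e'.restrictScalars R)⟩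
end

section
/- Let R := ℂ[X,Y,Z]/(X² + Y³ + Z⁷) with x, y, z the images of X, Y, Z. Then every ℂ-algebra automorphism of R sends (x, y, z) to (λx, μy, νz) for some nonzero scalars λ, μ, ν ∈ ℂ. -/
open MvPolynomial

/-- `R = ℂ[X,Y,Z]/(X² + Y³ + Z⁷)`. -/
noncomputable abbrev Rring : Type :=
  MvPolynomial (Fin 3) ℂ ⧸ Ideal.span {((X 0) ^ 2 + (X 1) ^ 3 + (X 2) ^ 7 : MvPolynomial (Fin 3) ℂ)}

/-- `x`, the image of `X` in `R`. -/
noncomputable def xx : Rring := Ideal.Quotient.mk _ (X 0)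

/-- `y`, the image of `Y` in `R`. -/
noncomputable def yy : Rring := Ideal.Quotient.mk _ (X 1)

/-- `z`, the image of `Z` in `R`. -/
noncomputable def zz : Rring := Ideal.Quotient.mk _ (X 2)

section core
open Polynomial in
theorem core_w {R : Type*} [CommRing R] [IsDomain R] [Algebra ℂ R] 
    (δ : R →ₐ[ℂ] Polynomial R) (hinj : Function.Injective δ) 
    (hE : ∀ r, ∃ e, δ e = Polynomial.X * derivative (δ r))
    (hc : ∀ r, (δ r).natDegree = 0 → ∃ c : ℂ, r = algebraMap ℂ R c)
    (f g h : R) (hrel : f^2+g^3+h^7=0) (hf0 : f ≠ 0) (hg0 : g ≠ 0) (hh0 : h ≠ 0)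
    (hfc : (δ f).natDegree ≠ 0)
    (hfg : ∀ t, f ∣ g * t → f ∣ t) (hfh : ∀ t, f ∣ h * t → f ∣ t)
    (hgh : ∀ t, g ∣ h * t → g ∣ t) (hhg : ∀ t, h ∣ g * t → h ∣ t) :
    ∃ a b c : ℂ, Polynomial.X * derivative (δ f) = algebraMap ℂ R[X] a * δ f ∧ 
      Polynomial.X * derivative (δ g) = algebraMap ℂ R[X] b * δ g ∧ 
      Polynomial.X * derivative (δ h) = algebraMap ℂ R[X] c * δ h ∧ 2 * a = 3 * b ∧ 7 * c = 3 * b := by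
  obtain ⟨ef, hef⟩ := hE f
  obtain ⟨eg, heg⟩ := hE g
  obtain ⟨eh, heh⟩ := hE h
  have hd : ∀ r e, δ e = Polynomial.X * derivative (δ r) → (δ e).natDegree ≤ (δ r).natDegree := by
    intro r e he
    rw [he, Polynomial.natDegree_le_iff_coeff_eq_zero]
    intro N hN
    obtain ⟨n, rfl⟩ : ∃ n, N = n + 1 := ⟨N - 1, by omega⟩
    rw [Polynomial.coeff_X_mul, Polynomial.coeff_derivative, Polynomial.coeff_eq_zero_of_natDegree_lt hN, zero_mul]
  have hrel2 : 2 * f * ef + 3 * g^2 * eg + 7 * h^6 * eh = 0 := by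
    apply hinj
    have h1 := congrArg (fun p => Polynomial.X * derivative (δ p)) hrel
    simp only [map_add, map_pow, map_zero, derivative_pow, mul_zero] at h1
    simp only [map_add, map_mul, map_pow, map_zero, map_ofNat, hef, heg, heh]
    rw [← h1]
    simp only [Nat.cast_ofNat, Nat.add_one_sub_one, pow_one]
    rw [map_ofNat (Polynomial.C : R →+* R[X]) 2, map_ofNat (Polynomial.C : R →+* R[X]) 3,
      map_ofNat (Polynomial.C : R →+* R[X]) 7]
    ring
  have h1 : (7 * g * eh - 3 * h * eg) * g^2 = (2 * h * ef - 7 * f * eh) * f := by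
    linear_combination 7 * eh * hrel - h * hrel2
  have h2 : (7 * g * eh - 3 * h * eg) * h^6 = (3 * f * eg - 2 * g * ef) * f := by
    linear_combination -3 * eg * hrel + g * hrel2
  obtain ⟨w, hw⟩ : f ∣ (7 * g * eh - 3 * h * eg) := by
    apply hfg; apply hfg
    exact ⟨(2 * h * ef - 7 * f * eh), by linear_combination h1⟩
  have hB : 2 * h * ef - 7 * f * eh = w * g^2 := by
    apply mul_right_cancel₀ hf0
    rw [← h1, hw]; ring
  have hC : 3 * f * eg - 2 * g * ef = w * h^6 := by
    apply mul_right_cancel₀ hf0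
    rw [← h2, hw]; ring
  have hne : ∀ {r}, r ≠ 0 → δ r ≠ 0 := fun {r} hr => (map_ne_zero_iff δ hinj).2 hr
  have hw0 : w = 0 := by
    by_contra hw0
    have key : ∀ (p q p' q' u : R) (m n : ℕ), m * p * q' - n * q * p' = u → 
        (δ p').natDegree ≤ (δ p).natDegree → (δ q').natDegree ≤ (δ q).natDegree → 
        (δ u).natDegree ≤ (δ p).natDegree + (δ q).natDegree := by
      intro p q p' q' u m n hu hp hq
      rw [← hu]
      simp only [map_sub, map_mul, map_natCast]
      refine (natDegree_sub_le _ _).trans (max_le ?_ ?_)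
      · refine natDegree_mul_le.trans (add_le_add ?_ hq)
        exact natDegree_mul_le.trans (by simp)
      · rw [add_comm]
        refine natDegree_mul_le.trans (add_le_add ?_ hp)
        exact natDegree_mul_le.trans (by simp)
    have k1 := key g h eg eh _ 7 3 (by exact_mod_cast hw) (hd _ _ heg) (hd _ _ heh)
    have k2 := key h f eh ef _ 2 7 (by exact_mod_cast hB) (hd _ _ heh) (hd _ _ hef)
    have k3 := key f g ef eg _ 3 2 (by exact_mod_cast hC) (hd _ _ hef) (hd _ _ heg)
    rw [map_mul, natDegree_mul (hne hf0) (hne hw0)] at k1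
    rw [map_mul, natDegree_mul (hne hw0) (by simpa using hne hg0), map_pow, natDegree_pow] at k2
    rw [map_mul, natDegree_mul (hne hw0) (by simpa using hne hh0), map_pow, natDegree_pow] at k3
    have hrel' : δ f ^ 2 + δ g ^ 3 + δ h ^ 7 = 0 := by
      simpa using congrArg δ hrel
    have m1 : 2 * (δ f).natDegree ≤ max (3 * (δ g).natDegree) (7 * (δ h).natDegree) := by
      have : δ f ^ 2 = -(δ g ^ 3) - δ h ^ 7 := by linear_combination hrel'
      have := congrArg natDegree this
      rw [natDegree_pow] at this
      rw [this]
      refine (natDegree_sub_le _ _).trans ?_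
      simp [natDegree_pow]
    have m2 : 3 * (δ g).natDegree ≤ max (2 * (δ f).natDegree) (7 * (δ h).natDegree) := by
      have : δ g ^ 3 = -(δ f ^ 2) - δ h ^ 7 := by linear_combination hrel'
      have := congrArg natDegree this
      rw [natDegree_pow] at this
      rw [this]
      refine (natDegree_sub_le _ _).trans ?_
      simp [natDegree_pow]
    have m3 : 7 * (δ h).natDegree ≤ max (2 * (δ f).natDegree) (3 * (δ g).natDegree) := by
      have : δ h ^ 7 = -(δ f ^ 2) - δ g ^ 3 := by linear_combination hrel'
      have := congrArg natDegree this
      rw [natDegree_pow] at this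
      rw [this]
      refine (natDegree_sub_le _ _).trans ?_
      simp [natDegree_pow]
    omega
  subst hw0
  have hu : ∀ n : ℕ, n ≠ 0 → ∀ r s : R, r ∣ (n : R) * s → r ∣ s := by
    intro n hn r s hrs
    have h3 : s = algebraMap ℂ R (n : ℂ)⁻¹ * ((n : R) * s) := by
      rw [← mul_assoc, ← map_natCast (algebraMap ℂ R) n, ← map_mul, 
        inv_mul_cancel₀ (by exact_mod_cast hn)]
      simp
    rw [h3]; exact hrs.mul_left _
  have hcon : ∀ r e, r ≠ 0 → δ e = Polynomial.X * derivative (δ r) → r ∣ e → 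
      ∃ c : ℂ, e = algebraMap ℂ R c * r := by
    rintro r e hr he ⟨u, hu⟩
    by_cases hu0 : u = 0
    · exact ⟨0, by simp [hu, hu0]⟩
    · have := hd r e he
      rw [hu, map_mul, natDegree_mul (hne hr) (hne hu0)] at this
      obtain ⟨c, hc⟩ := hc u (by omega)
      exact ⟨c, by rw [hu, hc, mul_comm]⟩
  obtain ⟨a, ha⟩ := hcon f ef hf0 hef (by
    apply hu 2 (by norm_num); apply hfh
    exact ⟨7 * eh, by push_cast; linear_combination hB⟩)
  obtain ⟨b, hb⟩ := hcon g eg hg0 heg (by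
    apply hu 3 (by norm_num); apply hgh
    exact ⟨7 * eh, by push_cast; linear_combination -hw⟩)
  obtain ⟨c, hc'⟩ := hcon h eh hh0 heh (by
    apply hu 7 (by norm_num); apply hhg
    exact ⟨3 * eg, by push_cast; linear_combination hw⟩)
  have hainj := FaithfulSMul.algebraMap_injective ℂ R
  refine ⟨a, b, c, ?_, ?_, ?_, ?_, ?_⟩
  · rw [← hef, ha, map_mul, AlgHom.commutes]
  · rw [← heg, hb, map_mul, AlgHom.commutes]
  · rw [← heh, hc', map_mul, AlgHom.commutes]
  · apply hainj
    apply mul_right_cancel₀ (mul_ne_zero hf0 hg0)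
    simp only [map_mul, map_ofNat]
    rw [ha, hb] at hC
    linear_combination -hC
  · apply hainj
    apply mul_right_cancel₀ (mul_ne_zero hg0 hh0)
    simp only [map_mul, map_ofNat]
    rw [hb, hc'] at hw
    linear_combination hw

open Polynomial in
theorem core_hom {R : Type*} [CommRing R] [IsDomain R] [Algebra ℂ R] (p : R[X]) (c : ℂ) 
    (h : Polynomial.X * derivative p = algebraMap ℂ R[X] c * p) (hp : p ≠ 0) :
    c = p.natDegree ∧ p = Polynomial.C (p.eval 1) * Polynomial.X ^ p.natDegree := by
  have hainj := FaithfulSMul.algebraMap_injective ℂ R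
  have h1 : ∀ n, p.coeff n ≠ 0 → c = n := by
    intro n hn
    have := congrArg (fun q => q.coeff n) h
    simp only [Polynomial.algebraMap_apply, Polynomial.coeff_C_mul] at this
    apply hainj
    apply mul_right_cancel₀ hn
    rw [← this]
    cases n with
    | zero => simp
    | succ n => 
      rw [Polynomial.coeff_X_mul, Polynomial.coeff_derivative, map_natCast]; push_cast; ring
  have h2 := h1 p.natDegree (by simpa using hp)
  refine ⟨h2, ?_⟩
  have h3 : p = Polynomial.C (p.leadingCoeff) * Polynomial.X ^ p.natDegree := by
    ext n
    rw [Polynomial.coeff_C_mul_X_pow]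
    split_ifs with hn
    · rw [hn]; rfl
    · by_contra h4
      have := h1 n h4
      rw [h2] at this
      exact hn (by exact_mod_cast this.symm)
  have h4 := congrArg (Polynomial.eval 1) h3
  simp only [Polynomial.eval_mul, Polynomial.eval_C, Polynomial.eval_pow, Polynomial.eval_X, one_pow, mul_one] at h4
  rw [h4]
  exact h3
end core

theorem sig_dvd {σ : Type*} [DecidableEq σ] (i : σ) (p : MvPolynomial σ ℂ) : 
   X i ∣ p - aeval (fun l => if l = i then (0 : MvPolynomial σ ℂ) else X l) p := by
  induction p using MvPolynomial.induction_on with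
  | C a => simp [MvPolynomial.algebraMap_eq]
  | add p q hp hq => rw [map_add, add_sub_add_comm]; exact dvd_add hp hq
  | mul_X p j hp => 
    rw [map_mul, aeval_X]
    split_ifs with hj
    · subst hj; simp
    · rw [← sub_mul]; exact hp.mul_right _

theorem reg {σ : Type*} [DecidableEq σ] (i j k : σ) (hij : i ≠ j) (hik : i ≠ k) (hjk : j ≠ k) 
    (a b c : ℕ) (F T A q : MvPolynomial σ ℂ)
    (hF : F = X i ^ (a+1) + X j ^ (b+1) + X k ^ c)
    (h : X j * T = X i * A + F * q) : ∃ A' q', T = X i * A' + F * q' := by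
  obtain ⟨u, hu⟩ := sig_dvd i T
  have h1 := congrArg (aeval (R := ℂ) (fun l => if l = i then (0 : MvPolynomial σ ℂ) else X l)) h
  simp only [hF, map_mul, map_add, map_pow, aeval_X, if_neg hij.symm, if_neg hik.symm, if_true] at h1
  set s := aeval (R := ℂ) (fun l => if l = i then (0 : MvPolynomial σ ℂ) else X l)
  have hp : Prime (X j : MvPolynomial σ ℂ) := MvPolynomial.X_prime
  have h2 : X j ∣ X k ^ c * s q := 
    ⟨s T - X j ^ b * s q, by linear_combination -h1⟩
  rcases hp.dvd_or_dvd h2 with h3 | ⟨q1, h3⟩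
  · have := hp.dvd_of_dvd_pow h3
    rw [MvPolynomial.X_dvd_X] at this
    simp_all
  · rw [h3] at h1
    have h4 : s T = (X j ^ (b+1) + X k ^ c) * q1 := by
      apply mul_left_cancel₀ (MvPolynomial.X_ne_zero j (R := ℂ))
      linear_combination h1
    exact ⟨u - X i ^ a * q1, q1, by rw [hF]; linear_combination hu + h4⟩

theorem primeF : Prime ((X 0) ^ 2 + (X 1) ^ 3 + (X 2) ^ 7 : MvPolynomial (Fin 3) ℂ) := by
  rw [← irreducible_iff_prime, ← MulEquiv.irreducible_iff (finSuccEquiv ℂ 2)]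
  have e : (finSuccEquiv ℂ 2) ((X 0) ^ 2 + (X 1) ^ 3 + (X 2) ^ 7 : MvPolynomial (Fin 3) ℂ) = 
      Polynomial.X ^ 2 + Polynomial.C (X 0 ^ 3 + X 1 ^ 7) := by
    have h1 : finSuccEquiv ℂ 2 (X 1) = Polynomial.C (X 0) := finSuccEquiv_X_succ (j := 0)
    have h2 : finSuccEquiv ℂ 2 (X 2) = Polynomial.C (X 1) := finSuccEquiv_X_succ (j := 1)
    simp only [map_add, map_pow, finSuccEquiv_X_zero, h1, h2, add_assoc]
  rw [e]
  have hm := Polynomial.monic_X_pow_add_C (X 0 ^ 3 + X 1 ^ 7 : MvPolynomial (Fin 2) ℂ) (n := 2) (by norm_num)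
  have hd := Polynomial.natDegree_X_pow_add_C (n := 2) (r := (X 0 ^ 3 + X 1 ^ 7 : MvPolynomial (Fin 2) ℂ))
  rw [Polynomial.Monic.irreducible_iff_roots_eq_zero_of_degree_le_three hm (by rw [hd]) (by rw [hd]; norm_num)]
  rw [Multiset.eq_zero_iff_forall_notMem]
  intro p hp
  have hp := Polynomial.isRoot_of_mem_roots hp
  simp only [Polynomial.IsRoot, Polynomial.eval_add, Polynomial.eval_pow, Polynomial.eval_X, Polynomial.eval_C] at hp
  have h1 := congrArg (aeval (![Polynomial.X, 0] : Fin 2 → Polynomial ℂ)) hp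
  simp at h1
  have h2 := congrArg Polynomial.natDegree (eq_neg_of_add_eq_zero_left h1)
  simp at h2
  omega

open Polynomial in
theorem core_main {R : Type*} [CommRing R] [IsDomain R] [Algebra ℂ R] (x y z : R)
    (hrel : x^2+y^3+z^7=0)
    (hgen : ∀ r : R, ∃ p : MvPolynomial (Fin 3) ℂ, MvPolynomial.aeval ![x,y,z] p = r)
    (hx0 : x ≠ 0) (hy0 : y ≠ 0) (hz0 : z ≠ 0)
    (δ : R →ₐ[ℂ] R[X]) 
    (hδx : δ x = Polynomial.C x * Polynomial.X ^ 21) (hδy : δ y = Polynomial.C y * Polynomial.X ^ 14)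
    (hδz : δ z = Polynomial.C z * Polynomial.X ^ 6)
    (hxy : ∀ t, x ∣ y * t → x ∣ t) (hxz : ∀ t, x ∣ z * t → x ∣ t)
    (hyz : ∀ t, y ∣ z * t → y ∣ t) (hzy : ∀ t, z ∣ y * t → z ∣ t)
    (φ : R ≃ₐ[ℂ] R) :
    ∃ lam mu nu : ℂ, lam ≠ 0 ∧ mu ≠ 0 ∧ nu ≠ 0 ∧
      φ x = algebraMap ℂ R lam * x ∧
      φ y = algebraMap ℂ R mu * y ∧
      φ z = algebraMap ℂ R nu * z := by
  have hind : ∀ P : R → Prop, (∀ c, P (algebraMap ℂ R c)) → (∀ r s, P r → P s → P (r + s)) → 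
      (∀ r s, P r → P s → P (r * s)) → P x → P y → P z → ∀ r, P r := by
    intro P hc ha hm hx hy hz r
    obtain ⟨p, rfl⟩ := hgen r
    induction p using MvPolynomial.induction_on with
    | C a => simpa using hc a
    | add p q hp hq => rw [map_add]; exact ha _ _ hp hq
    | mul_X p j hp => 
      rw [map_mul, MvPolynomial.aeval_X]
      refine hm _ _ hp ?_
      fin_cases j
      · exact hx
      · exact hy
      · exact hz
  have heval : ∀ r, (δ r).eval 1 = r := by
    apply hind
    · intro c; simp [Polynomial.algebraMap_apply]
    · intro r s hr hs; simp [hr, hs]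
    · intro r s hr hs; simp [hr, hs]
    · simp [hδx]
    · simp [hδy]
    · simp [hδz]
  have hinj : Function.Injective δ := Function.LeftInverse.injective heval
  have hE : ∀ r, ∃ e, δ e = Polynomial.X * derivative (δ r) := by
    apply hind
    · intro c; exact ⟨0, by simp [Polynomial.algebraMap_apply]⟩
    · rintro r s ⟨e, he⟩ ⟨e', he'⟩; exact ⟨e + e', by simp [he, he', mul_add]⟩
    · rintro r s ⟨e, he⟩ ⟨e', he'⟩; exact ⟨e * s + r * e', by simp [he, he']; ring⟩
    · refine ⟨21 * x, ?_⟩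
      rw [map_mul, hδx, derivative_C_mul_X_pow, map_ofNat]
      simp only [Nat.cast_ofNat, map_mul]
      rw [map_ofNat (Polynomial.C : R →+* R[X]) 21]; ring
    · refine ⟨14 * y, ?_⟩
      rw [map_mul, hδy, derivative_C_mul_X_pow, map_ofNat]
      simp only [Nat.cast_ofNat, map_mul]
      rw [map_ofNat (Polynomial.C : R →+* R[X]) 14]; ring
    · refine ⟨6 * z, ?_⟩
      rw [map_mul, hδz, derivative_C_mul_X_pow, map_ofNat]
      simp only [Nat.cast_ofNat, map_mul]
      rw [map_ofNat (Polynomial.C : R →+* R[X]) 6]; ring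
  have hc0 : ∀ r, ∃ c : ℂ, (δ r).eval 0 = algebraMap ℂ R c := by
    apply hind
    · intro c; exact ⟨c, by simp [Polynomial.algebraMap_apply]⟩
    · rintro r s ⟨c, hc⟩ ⟨d, hd⟩; exact ⟨c + d, by simp [hc, hd]⟩
    · rintro r s ⟨c, hc⟩ ⟨d, hd⟩; exact ⟨c * d, by simp [hc, hd]⟩
    · exact ⟨0, by simp [hδx]⟩
    · exact ⟨0, by simp [hδy]⟩
    · exact ⟨0, by simp [hδz]⟩
  have hc : ∀ r, (δ r).natDegree = 0 → ∃ c : ℂ, r = algebraMap ℂ R c := by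
    intro r hr
    obtain ⟨c, hc⟩ := hc0 r
    refine ⟨c, ?_⟩
    rw [← hc]
    have h1 := heval r
    rw [Polynomial.eq_C_of_natDegree_eq_zero hr] at h1 ⊢
    simp only [Polynomial.eval_C] at h1 ⊢
    exact h1.symm
  have htr : ∀ a b : R, (∀ t, a ∣ b * t → a ∣ t) → ∀ t, φ a ∣ φ b * t → φ a ∣ t := by
    intro a b hab t ht
    have h1 := map_dvd φ.symm ht
    simp only [map_mul, AlgEquiv.symm_apply_apply] at h1
    have h2 := map_dvd φ (hab _ h1)
    simpa using h2
  have hφ0 : ∀ {a : R}, a ≠ 0 → φ a ≠ 0 := fun {a} ha => (map_ne_zero_iff φ φ.injective).2 ha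
  have hfc : (δ (φ x)).natDegree ≠ 0 := by
    intro h0
    obtain ⟨c, hc⟩ := hc _ h0
    have h1 := congrArg φ.symm hc
    rw [AlgEquiv.symm_apply_apply, AlgEquiv.commutes] at h1
    have h2 := congrArg (fun r => (δ r).natDegree) h1
    simp only [hδx, AlgHom.commutes, Polynomial.algebraMap_apply, natDegree_C] at h2
    rw [natDegree_C_mul_X_pow _ _ hx0] at h2
    omega
  obtain ⟨a, b, c, ha, hb, hc', hab, hcb⟩ := core_w δ hinj hE hc (φ x) (φ y) (φ z)
    (by simpa using congrArg φ hrel) (hφ0 hx0) (hφ0 hy0) (hφ0 hz0) hfc (htr _ _ hxy) (htr _ _ hxz)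
    (htr _ _ hyz) (htr _ _ hzy)
  have hne : ∀ {r}, r ≠ 0 → δ r ≠ 0 := fun {r} hr => (map_ne_zero_iff δ hinj).2 hr
  obtain ⟨ha1, ha2⟩ := core_hom _ _ ha (hne (hφ0 hx0))
  obtain ⟨hb1, hb2⟩ := core_hom _ _ hb (hne (hφ0 hy0))
  obtain ⟨hc1, hc2⟩ := core_hom _ _ hc' (hne (hφ0 hz0))
  rw [heval] at ha2 hb2 hc2
  rw [ha1, hb1] at hab
  rw [hc1, hb1] at hcb
  generalize (δ (φ x)).natDegree = l at *
  generalize (δ (φ y)).natDegree = m at *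
  generalize (δ (φ z)).natDegree = n at *
  have hab' : 2 * l = 3 * m := by exact_mod_cast hab
  have hcb' : 7 * n = 3 * m := by exact_mod_cast hcb
  obtain ⟨k, rfl⟩ : ∃ k, n = 6 * k := ⟨n / 6, by omega⟩
  obtain rfl : m = 14 * k := by omega
  obtain rfl : l = 21 * k := by omega
  have hexp : ∀ r, δ (φ r) = expand R k ((δ r).map (φ : R →+* R)) := by
    apply hind
    · intro c; simp [Polynomial.algebraMap_apply]
    · intro r s hr hs; simp [hr, hs]
    · intro r s hr hs; simp [hr, hs]
    · rw [ha2, hδx]; simp only [Polynomial.map_mul, Polynomial.map_pow, Polynomial.map_C, Polynomial.map_X,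
        map_mul, map_pow, Polynomial.expand_C, Polynomial.expand_X, ← pow_mul, mul_comm k]; rfl
    · rw [hb2, hδy]; simp only [Polynomial.map_mul, Polynomial.map_pow, Polynomial.map_C, Polynomial.map_X,
        map_mul, map_pow, Polynomial.expand_C, Polynomial.expand_X, ← pow_mul, mul_comm k]; rfl
    · rw [hc2, hδz]; simp only [Polynomial.map_mul, Polynomial.map_pow, Polynomial.map_C, Polynomial.map_X,
        map_mul, map_pow, Polynomial.expand_C, Polynomial.expand_X, ← pow_mul, mul_comm k]; rfl
  have hk0 : 0 < k := by omega
  have hdiv : ∀ (r : R) (N : ℕ), r ≠ 0 → δ r = Polynomial.C r * Polynomial.X ^ N → k ∣ N := by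
    intro r N hr hrN
    have h1 := hexp (φ.symm r)
    rw [AlgEquiv.apply_symm_apply, hrN] at h1
    by_contra hkN
    have h2 := congrArg (fun p => p.coeff N) h1
    simp only [Polynomial.coeff_C_mul_X_pow, if_true, Polynomial.coeff_expand hk0, if_neg hkN] at h2
    exact hr h2
  have hk1 : k = 1 := by
    have h1 := hdiv x 21 hx0 hδx
    have h2 := hdiv y 14 hy0 hδy
    have h3 := hdiv z 6 hz0 hδz
    have h4 : k ∣ 1 := by
      have h5 : k ∣ 15 := (Nat.dvd_sub h1 h3)
      exact (Nat.dvd_sub h5 h2)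
    exact Nat.dvd_one.1 h4
  subst hk1
  have hmon : ∀ (N : ℕ) (i j k : ℕ) (hijk : ∀ i' j' k', 21 * i' + 14 * j' + 6 * k' = N → i' = i ∧ j' = j ∧ k' = k) (r : R), 
      ∃ c : ℂ, (δ r).coeff N = algebraMap ℂ R c * (x ^ i * y ^ j * z ^ k) := by
    intro N i j k hijk r
    obtain ⟨p, rfl⟩ := hgen r
    induction p using MvPolynomial.induction_on' with
    | add p q hp hq => 
      obtain ⟨c, hc⟩ := hp
      obtain ⟨d, hd⟩ := hq
      exact ⟨c + d, by simp [hc, hd, add_mul]⟩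
    | monomial u a => 
      have h1 : δ (MvPolynomial.aeval ![x,y,z] (MvPolynomial.monomial u a)) = 
          Polynomial.C (algebraMap ℂ R a * (x ^ u 0 * y ^ u 1 * z ^ u 2)) * 
            Polynomial.X ^ (21 * u 0 + 14 * u 1 + 6 * u 2) := by
        rw [MvPolynomial.aeval_monomial, Finsupp.prod_fintype _ _ (by simp), Fin.prod_univ_three]
        simp [hδx, hδy, hδz, Polynomial.algebraMap_apply]
        ring
      rw [h1, Polynomial.coeff_C_mul_X_pow]
      split_ifs with hN
      · obtain ⟨h2, h3, h4⟩ := hijk _ _ _ hN.symm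
        exact ⟨a, by rw [h2, h3, h4]⟩
      · exact ⟨0, by simp⟩
  obtain ⟨lam, hlam⟩ := hmon 21 1 0 0 (by omega) (φ x)
  obtain ⟨mu, hmu⟩ := hmon 14 0 1 0 (by omega) (φ y)
  obtain ⟨nu, hnu⟩ := hmon 6 0 0 1 (by omega) (φ z)
  rw [ha2] at hlam
  rw [hb2] at hmu
  rw [hc2] at hnu
  simp only [Polynomial.coeff_C_mul_X_pow, if_true, pow_zero, pow_one, mul_one, one_mul] at hlam hmu hnu
  refine ⟨lam, mu, nu, ?_, ?_, ?_, hlam, hmu, hnu⟩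
  · rintro rfl; exact hφ0 hx0 (by rw [hlam]; simp)
  · rintro rfl; exact hφ0 hy0 (by rw [hmu]; simp)
  · rintro rfl; exact hφ0 hz0 (by rw [hnu]; simp)

theorem Rring_dvd (i j k : Fin 3) (hij : i ≠ j) (hik : i ≠ k) (hjk : j ≠ k) (a b c : ℕ)
    (hF : ((X 0) ^ 2 + (X 1) ^ 3 + (X 2) ^ 7 : MvPolynomial (Fin 3) ℂ) = 
      X i ^ (a+1) + X j ^ (b+1) + X k ^ c) (t : Rring) 
    (h : (Ideal.Quotient.mk _ (X i) : Rring) ∣ Ideal.Quotient.mk _ (X j) * t) :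
    (Ideal.Quotient.mk _ (X i) : Rring) ∣ t := by
  obtain ⟨T, rfl⟩ := Ideal.Quotient.mk_surjective t
  obtain ⟨A, hA⟩ := h
  obtain ⟨A, rfl⟩ := Ideal.Quotient.mk_surjective A
  rw [← map_mul, ← map_mul, Ideal.Quotient.eq, Ideal.mem_span_singleton] at hA
  obtain ⟨q, hq⟩ := hA
  obtain ⟨A', q', h'⟩ := reg i j k hij hik hjk a b c _ T A q hF (by linear_combination hq)
  refine ⟨Ideal.Quotient.mk _ A', ?_⟩
  rw [← map_mul, Ideal.Quotient.eq, Ideal.mem_span_singleton]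
  exact ⟨q', by linear_combination h'⟩

theorem Rring_rel : xx ^ 2 + yy ^ 3 + zz ^ 7 = 0 := by
  unfold xx yy zz
  rw [← map_pow, ← map_pow, ← map_pow, ← map_add, ← map_add, Ideal.Quotient.eq_zero_iff_mem]
  exact Ideal.mem_span_singleton_self _

theorem Rring_dom : IsDomain Rring := by
  have h := (Ideal.span_singleton_prime primeF.ne_zero).2 primeF
  exact Ideal.Quotient.isDomain _

theorem Rring_eval (v : Fin 3 → ℂ) (hv : v 0 ^ 2 + v 1 ^ 3 + v 2 ^ 7 = 0) (i : Fin 3) (hi : v i ≠ 0) :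
    (Ideal.Quotient.mk _ (X i) : Rring) ≠ 0 := by
  rw [Ne, Ideal.Quotient.eq_zero_iff_mem, Ideal.mem_span_singleton]
  rintro ⟨q, hq⟩
  have := congrArg (MvPolynomial.eval v) hq
  simp [hv] at this
  exact hi this

theorem Rring_delta : ∃ δ : Rring →ₐ[ℂ] Polynomial Rring, 
    δ xx = Polynomial.C xx * Polynomial.X ^ 21 ∧ δ yy = Polynomial.C yy * Polynomial.X ^ 14 ∧ 
    δ zz = Polynomial.C zz * Polynomial.X ^ 6 := by
  let w : Fin 3 → Polynomial Rring := ![Polynomial.C xx * Polynomial.X ^ 21, 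
    Polynomial.C yy * Polynomial.X ^ 14, Polynomial.C zz * Polynomial.X ^ 6]
  have hI : ∀ a ∈ Ideal.span {((X 0) ^ 2 + (X 1) ^ 3 + (X 2) ^ 7 : MvPolynomial (Fin 3) ℂ)}, 
      aeval (R := ℂ) w a = 0 := by
    intro a ha
    obtain ⟨q, rfl⟩ := Ideal.mem_span_singleton.1 ha
    rw [map_mul]
    have h0 : w 0 = Polynomial.C xx * Polynomial.X ^ 21 := rfl
    have h1 : w 1 = Polynomial.C yy * Polynomial.X ^ 14 := rfl
    have h2 : w 2 = Polynomial.C zz * Polynomial.X ^ 6 := rfl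
    have h3 : Polynomial.C xx ^ 2 + Polynomial.C yy ^ 3 + Polynomial.C zz ^ 7 = 0 := by
      simp only [← Polynomial.C_pow, ← Polynomial.C_add, Rring_rel, Polynomial.C_0]
    simp only [map_add, map_pow, aeval_X, h0, h1, h2]
    linear_combination Polynomial.X ^ 42 * (aeval (R := ℂ) w q) * h3
  refine ⟨Ideal.Quotient.liftₐ _ (aeval (R := ℂ) w) hI, ?_, ?_, ?_⟩
  · exact aeval_X w 0
  · exact aeval_X w 1
  · exact aeval_X w 2

/-- Every `ℂ`-algebra automorphism of `R = ℂ[X,Y,Z]/(X² + Y³ + Z⁷)` sends `(x, y, z)` to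
`(λx, μy, νz)` for some nonzero scalars `λ, μ, ν ∈ ℂ`. -/
theorem stmt16 (φ : Rring ≃ₐ[ℂ] Rring) :
    ∃ lam mu nu : ℂ, lam ≠ 0 ∧ mu ≠ 0 ∧ nu ≠ 0 ∧
      φ xx = algebraMap ℂ Rring lam * xx ∧
      φ yy = algebraMap ℂ Rring mu * yy ∧
      φ zz = algebraMap ℂ Rring nu * zz := by
  have := Rring_dom
  obtain ⟨δ, h1, h2, h3⟩ := Rring_delta
  refine core_main xx yy zz Rring_rel ?_ ?_ ?_ ?_ δ h1 h2 h3 ?_ ?_ ?_ ?_ φ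
  · intro r
    obtain ⟨p, rfl⟩ := Ideal.Quotient.mk_surjective r
    refine ⟨p, ?_⟩
    have h : aeval (R := ℂ) ![xx, yy, zz] = Ideal.Quotient.mkₐ ℂ 
        (Ideal.span {((X 0) ^ 2 + (X 1) ^ 3 + (X 2) ^ 7 : MvPolynomial (Fin 3) ℂ)}) := by
      apply MvPolynomial.algHom_ext
      intro i
      rw [aeval_X]
      fin_cases i <;> rfl
    rw [h]; rfl
  · exact Rring_eval ![Complex.I, 1, 0] (by simp) 0 (by simp)
  · exact Rring_eval ![Complex.I, 1, 0] (by simp) 1 (by simp)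
  · exact Rring_eval ![Complex.I, 0, 1] (by simp) 2 (by simp)
  · exact Rring_dvd 0 1 2 (by decide) (by decide) (by decide) 1 2 7 (by ring)
  · exact Rring_dvd 0 2 1 (by decide) (by decide) (by decide) 1 6 3 (by ring)
  · exact Rring_dvd 1 2 0 (by decide) (by decide) (by decide) 2 6 2 (by ring)
  · exact Rring_dvd 2 1 0 (by decide) (by decide) (by decide) 6 2 2 (by ring)
end
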